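/- For n ≥ 3, the quotient rings R_n/I_{C_n} and R_{n+1}/P_n have the same Betti table: β_0(R_n/I_{C_n}) = 1 = β_0(R_{n+1}/P_n), and for every 1 ≤ i ≤ n−1, β_i(R_n/I_{C_n}) = i·C(n, i+1) = β_i(R_{n+1}/P_n) (binomial coefficient), while both Betti numbers vanish for i ≥ n. -/

import Mathlib

noncomputable section

open MvPolynomial

/-- Row of the Laplacian matrix of the `n`-cycle on `Fin n`
(vertex `j` of the paper corresponds to index `j-1`). -/
def cycLap (n : ℕ) [NeZero n] (j : Fin n) : Fin n → ℤ :=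
  fun l => if l = j then 2 else if l = j + 1 ∨ j = l + 1 then -1 else 0

/-- The cycle graph `C_n` on `Fin n`. -/
def cycleG (n : ℕ) [NeZero n] : SimpleGraph (Fin n) :=
  SimpleGraph.fromRel (fun i j => j = i + 1)

/-- The lattice ideal of a lattice `L ⊆ ℤ^n` in `K[x_1,…,x_n]`. -/
def latticeIdeal (n : ℕ) (K : Type*) [Field K] (L : Submodule ℤ (Fin n → ℤ)) :
    Ideal (MvPolynomial (Fin n) K) :=
  Ideal.span { f | ∃ u v : Fin n → ℕ,
    ((fun i => (u i : ℤ)) - fun i => (v i : ℤ)) ∈ L ∧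
    f = (∏ i, X i ^ u i) - ∏ i, X i ^ v i }

open Classical in
/-- The exponent vector of the monomial `x^{S → S̄}`: the `i`-th entry is the number
of edges of the cycle joining `i ∈ S` to the complement of `S`. -/
def outVec (n : ℕ) [NeZero n] (S : Set (Fin n)) (i : Fin n) : ℕ :=
  if i ∈ S then (if i + 1 ∈ S then 0 else 1) + (if i - 1 ∈ S then 0 else 1) else 0

/-- The monomial `x^{S → S̄}`. -/
def outMono (n : ℕ) (K : Type*) [NeZero n] [Field K] (S : Set (Fin n)) :
    MvPolynomial (Fin n) K :=
  ∏ i, X i ^ outVec n S i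

open Classical in
/-- `b_V = ∑_{j ∈ V} b_j`, sum of Laplacian rows over a set of vertices. -/
def bPart (n : ℕ) [NeZero n] (S : Set (Fin n)) : Fin n → ℤ :=
  ∑ j : Fin n, if j ∈ S then cycLap n j else 0

/-- The toppling ideal of the parcycle `(C_n, {V_1,…,V_k})`: the lattice ideal of the
lattice generated by the vectors `b_{V_j}`. -/
def topplingPar (n k : ℕ) (K : Type*) [NeZero n] [Field K] (V : Fin k → Set (Fin n)) :
    Ideal (MvPolynomial (Fin n) K) :=
  latticeIdeal n K (Submodule.span ℤ (Set.range fun j => bPart n (V j)))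

/-- `S` is a connected-parset of the parcycle `(C_n, V)`: a union of parts inducing a
connected subgraph of the cycle. -/
def isConnParset (n k : ℕ) [NeZero n] (V : Fin k → Set (Fin n)) (S : Set (Fin n)) : Prop :=
  (∃ T : Set (Fin k), S = ⋃ j ∈ T, V j) ∧ ((cycleG n).induce S).Connected

/-- The `G`-parking function ideal of a parcycle with sink part `V sink`. -/
def gparkIdeal (n k : ℕ) (K : Type*) [NeZero n] [Field K] (V : Fin k → Set (Fin n))
    (sink : Fin k) : Ideal (MvPolynomial (Fin n) K) :=
  Ideal.span { f | ∃ S : Set (Fin n), isConnParset n k V S ∧ ¬ V sink ⊆ S ∧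
    f = outMono n K S }

/-- The index in `Fin (n+1)` of the paper's variable `x_m`, `1 ≤ m ≤ n+1`. -/
def xIdx (n : ℕ) (m : ℕ) : Fin (n + 1) := ⟨(m - 1) % (n + 1), Nat.mod_lt _ (Nat.succ_pos n)⟩

/-- The defining ideal `P_n ⊆ K[x_1,…,x_{n+1}]` of the rational normal curve of degree `n`. -/
def Pideal (n : ℕ) (K : Type*) [Field K] : Ideal (MvPolynomial (Fin (n + 1)) K) :=
  Ideal.span { f | ∃ i j : ℕ, 2 ≤ i ∧ i ≤ j ∧ j ≤ n ∧
    f = X (xIdx n i) * X (xIdx n j) - X (xIdx n (i - 1)) * X (xIdx n (j + 1)) }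

open Classical in
/-- The `λ`-weight of an exponent vector. -/
def wdeg (n : ℕ) (lam : Fin n → ℕ) (u : Fin n →₀ ℕ) : ℕ := ∑ i, lam i * u i

open Classical in
/-- The `λ`-initial form of a polynomial: the sum of its terms of maximal `λ`-weight. -/
def initForm (n : ℕ) (K : Type*) [Field K] (lam : Fin n → ℕ) (f : MvPolynomial (Fin n) K) :
    MvPolynomial (Fin n) K :=
  ∑ u ∈ f.support.filter (fun u => wdeg n lam u = f.support.sup (wdeg n lam)),
    monomial u (coeff u f)

/-- The `λ`-initial ideal of an ideal. -/
def initIdeal (n : ℕ) (K : Type*) [Field K] (lam : Fin n → ℕ)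
    (I : Ideal (MvPolynomial (Fin n) K)) : Ideal (MvPolynomial (Fin n) K) :=
  Ideal.span { g | ∃ f ∈ I, f ≠ 0 ∧ g = initForm n K lam f }

open CategoryTheory in
/-- `Tor_i^{R}(R/𝔪, R/N)` as an `R`-module, for `R = K[x_1,…,x_m]` and `𝔪 = ⟨x_1,…,x_m⟩`. -/
def TorKN (m : ℕ) (K : Type*) [Field K] (i : ℕ) (N : Ideal (MvPolynomial (Fin m) K)) :
    ModuleCat (MvPolynomial (Fin m) K) :=
  ((Tor (ModuleCat (MvPolynomial (Fin m) K)) i).obj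
      (ModuleCat.of _ (MvPolynomial (Fin m) K ⧸ (Ideal.span (Set.range X) :
        Ideal (MvPolynomial (Fin m) K))))).obj
    (ModuleCat.of _ (MvPolynomial (Fin m) K ⧸ N))

/-!
Both quotients `A = R/I` are free over a polynomial subring `B = K[x_i : i ∈ s]`, with basis `1` and
the remaining variables `y_1, …, y_N` (so `n = N + 1`), and every product `y_k y_l` lies in `𝔪_B A`:
for the cycle `s = {x_1}`, for the rational normal curve `s = {x_1, x_{n+1}}`. That the products lie
in `𝔪_B A` is read off the binomials; that `1, y_1, …, y_N` are independent over `B` follows because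
they have distinct degrees in `ℤ/n` for a grading of `A` in which `B` sits in degree `0`.

The commuting operators `1 ⊗ y_k - y_k ⊗ 1` on the free `R`-module `R ⊗_B A` form a weakly regular
sequence with cokernel `A`, so their Koszul complex is a free resolution of `A` over `R`. It is not
minimal. Modulo `𝔪` the `k`-th operator sends the basis vector `1` to `y_k` and kills every `y_l`,
hence the `i`-th differential has rank `C(N, i+1)`, and
`β_i = (N+1) C(N, i) - C(N, i) - C(N, i+1) = i C(N+1, i+1)` for `i ≥ 1`.
-/

universe u v

open CategoryTheory TensorProduct

section BettiNumbers

variable {R : Type u} [CommRing R] {m : Ideal R}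

/-- The `i`-th Betti number of `M` with respect to the ideal `m` is `b`, in the form
`Tor_i^R(R/m, M) ≅ (R/m)^b`. -/
def HasBettiNumber (m : Ideal R) (M : Type u) [AddCommGroup M] [Module R M] (i b : ℕ) : Prop :=
  Nonempty (((Tor (ModuleCat.{u} R) i).obj (ModuleCat.of R (R ⧸ m))).obj (ModuleCat.of R M)
    ≃ₗ[R] (Fin b → R ⧸ m))

theorem length_eq_finrank_quotient [m.IsMaximal] (V : Type*) [AddCommGroup V] [Module R V]
    [Module (R ⧸ m) V] [IsScalarTower R (R ⧸ m) V] [Module.Finite (R ⧸ m) V] :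
    Module.length R V = Module.finrank (R ⧸ m) V := by
  let _ := Ideal.Quotient.field m
  rw [Module.length_eq_of_surjective (R := R ⧸ m) Ideal.Quotient.mk_surjective,
    Module.length_eq_finrank]

theorem nonempty_linearEquiv_pi_quotient [m.IsMaximal] {V : Type*} [AddCommGroup V] [Module R V]
    (hm : Module.IsTorsionBySet R V m) {b : ℕ} (hb : Module.length R V = b) :
    Nonempty (V ≃ₗ[R] (Fin b → R ⧸ m)) := by
  let _ := hm.module
  let _ := Ideal.Quotient.field m
  have : IsScalarTower R (R ⧸ m) V := hm.isScalarTower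
  have hlength : Module.length R V = Module.length (R ⧸ m) V :=
    Module.length_eq_of_surjective Ideal.Quotient.mk_surjective
  have : IsNoetherian (R ⧸ m) V :=
    (isFiniteLength_iff_isNoetherian_isArtinian.1
      (Module.length_ne_top_iff.1 (by simp [← hlength, hb]))).1
  have hrank : Module.finrank (R ⧸ m) V = b := by
    rw [length_eq_finrank_quotient (m := m)] at hb
    exact_mod_cast hb
  exact ⟨(LinearEquiv.ofFinrankEq V (Fin b → R ⧸ m)
    (by rw [hrank, Module.finrank_fin_fun])).restrictScalars R⟩

theorem length_submodule_add_length_quotient {X : Type*} [AddCommGroup X] [Module R X]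
    (S : Submodule R X) : Module.length R S + Module.length R (X ⧸ S) = Module.length R X :=
  (Module.length_eq_add_of_exact S.subtype S.mkQ S.subtype_injective S.mkQ_surjective
    (LinearMap.exact_subtype_mkQ S)).symm

theorem length_homology_add (S : ShortComplex (ModuleCat.{v} R)) :
    Module.length R (LinearMap.range S.f.hom) + Module.length R S.homology +
      Module.length R (LinearMap.range S.g.hom) = Module.length R S.X₂ := by
  have hrange : LinearMap.range S.moduleCatToCycles =
      (LinearMap.range S.f.hom).submoduleOf (LinearMap.ker S.g.hom) := by
    ext x
    exact ⟨fun ⟨y, hy⟩ => ⟨y, congrArg Subtype.val hy⟩, fun ⟨y, hy⟩ => ⟨y, Subtype.ext hy⟩⟩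
  have hle : LinearMap.range S.f.hom ≤ LinearMap.ker S.g.hom := by
    rintro _ ⟨x, rfl⟩
    exact S.moduleCat_zero_apply x
  have hcycles := length_submodule_add_length_quotient (LinearMap.range S.moduleCatToCycles)
  rw [hrange, (Submodule.submoduleOfEquivOfLe hle).length_eq, ← hrange] at hcycles
  rw [S.moduleCatHomologyIso.toLinearEquiv.length_eq,
    ← length_submodule_add_length_quotient (LinearMap.ker S.g.hom),
    (LinearMap.quotKerEquivRange S.g.hom).length_eq]
  exact congrArg (· + _) hcycles

theorem isTorsionBySet_homology (S : ShortComplex (ModuleCat.{v} R)) {s : Set R}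
    (hs : Module.IsTorsionBySet R S.X₂ s) : Module.IsTorsionBySet R S.homology s := by
  intro x a
  obtain ⟨z, rfl⟩ := (ModuleCat.epi_iff_surjective S.homologyπ).1 inferInstance x
  have haz : (a : R) • z = 0 := (ModuleCat.mono_iff_injective S.iCycles).1 inferInstance (by
    rw [map_smul, map_zero]
    exact @hs (S.iCycles z) a)
  rw [← map_smul, haz, map_zero]

/-- The projective resolution of `Z` given by an exact sequence `⋯ ⟶ K₁ ⟶ K₀ ⟶ Z ⟶ 0` with
projective terms `Kₙ`. -/
def projectiveResolutionOfExact {C : Type*} [Category* C] [Abelian C] {Z : C}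
    (K : ChainComplex C ℕ) [∀ n, Projective (K.X n)] (ε : K.X 0 ⟶ Z) [Epi ε]
    (w : K.d 1 0 ≫ ε = 0) (hε : (ShortComplex.mk _ _ w).Exact) (hK : ∀ n, K.ExactAt (n + 1)) :
    ProjectiveResolution Z where
  complex := K
  π := (ChainComplex.toSingle₀Equiv _ _).symm ⟨ε, w⟩
  quasiIso := ⟨fun n => by
    cases n with
    | zero =>
      rw [ChainComplex.quasiIsoAt₀_iff,
        ShortComplex.quasiIso_iff_of_zeros' _ (K.shape _ _ (by simp)) rfl rfl]
      refine (ShortComplex.exact_and_epi_g_iff_of_iso ?_).2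
        ⟨hε, inferInstanceAs (Epi ε)⟩
      exact ShortComplex.isoMk (Iso.refl _) (Iso.refl _) (Iso.refl _)
        ((Category.id_comp _).trans (Category.comp_id _).symm)
        ((Category.id_comp _).trans <|
          (ChainComplex.toSingle₀Equiv_symm_apply_f_zero _ w).symm.trans (Category.comp_id _).symm)
    | succ n =>
      rw [quasiIsoAt_iff_exactAt' _ _ (ChainComplex.exactAt_succ_single_obj _ _)]
      exact hK n⟩

section FreeResolution

variable {F : ℕ → Type u} [∀ i, AddCommGroup (F i)] [∀ i, Module R (F i)]
  {d : ∀ i, F (i + 1) →ₗ[R] F i}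

/-- The chain complex of modules with terms `F i` and differentials `d i : F (i + 1) → F i`. -/
def moduleChainComplex (hd : ∀ i, Function.Exact (d (i + 1)) (d i)) :
    ChainComplex (ModuleCat.{u} R) ℕ :=
  ChainComplex.of (fun i => ModuleCat.of R (F i)) (fun i => ModuleCat.ofHom (d i)) fun i => by
    rw [← ModuleCat.ofHom_comp, (hd i).linearMap_comp_eq_zero, ModuleCat.ofHom_zero]

theorem moduleChainComplex_d (hd : ∀ i, Function.Exact (d (i + 1)) (d i)) (i : ℕ) :
    (moduleChainComplex hd).d (i + 1) i = ModuleCat.ofHom (d i) :=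
  ChainComplex.of_d (fun i => ModuleCat.of R (F i)) (fun i => ModuleCat.ofHom (d i)) i

theorem exactAt_moduleChainComplex (hd : ∀ i, Function.Exact (d (i + 1)) (d i)) (i : ℕ) :
    (moduleChainComplex hd).ExactAt (i + 1) := by
  rw [HomologicalComplex.exactAt_iff' _ (i + 2) (i + 1) i (by simp) (by simp),
    ShortComplex.ShortExact.moduleCat_exact_iff_function_exact]
  change Function.Exact ((moduleChainComplex hd).d (i + 2) (i + 1)).hom
    ((moduleChainComplex hd).d (i + 1) i).hom
  rw [moduleChainComplex_d, moduleChainComplex_d]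
  exact hd i

variable {M : Type u} [AddCommGroup M] [Module R M] {ε : F 0 →ₗ[R] M}

/-- The projective resolution of `M` given by an exact sequence `⋯ → F 1 → F 0 → M → 0` of
modules. -/
def moduleProjectiveResolution [∀ i, Module.Projective R (F i)]
    (hd : ∀ i, Function.Exact (d (i + 1)) (d i)) (hdε : Function.Exact (d 0) ε)
    (hε : Function.Surjective ε) : ProjectiveResolution (ModuleCat.of R M) :=
  have (i : ℕ) : Projective ((moduleChainComplex hd).X i) :=
    inferInstanceAs (Projective (ModuleCat.of R (F i)))
  let π : (moduleChainComplex hd).X 0 ⟶ ModuleCat.of R M := ModuleCat.ofHom ε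
  have : Epi π := (ModuleCat.epi_iff_surjective _).2 hε
  have hcomp : (moduleChainComplex hd).d 1 0 ≫ π = 0 := by
    rw [moduleChainComplex_d]
    ext x
    exact hdε.apply_apply_eq_zero x
  have hexact : (ShortComplex.mk _ _ hcomp).Exact := by
    rw [ShortComplex.ShortExact.moduleCat_exact_iff_function_exact]
    change Function.Exact ((moduleChainComplex hd).d 1 0).hom ε
    rw [moduleChainComplex_d]
    exact hdε
  projectiveResolutionOfExact (moduleChainComplex hd) π hcomp hexact
    (exactAt_moduleChainComplex hd)

theorem length_range_lTensor_quotient [m.IsMaximal] {X Y : Type*} [AddCommGroup X] [Module R X]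
    [Module.Finite R X] [AddCommGroup Y] [Module R Y] (f : X →ₗ[R] Y) :
    Module.length R (LinearMap.range (f.lTensor (R ⧸ m))) =
      Module.finrank (R ⧸ m) (LinearMap.range (f.baseChange (R ⧸ m))) :=
  (length_eq_finrank_quotient (R := R) (m := m) (LinearMap.range (f.baseChange (R ⧸ m))) :)

theorem nonempty_linearEquiv_homology [m.IsMaximal] (S : ShortComplex (ModuleCat.{u} R))
    {X : Type u} [AddCommGroup X] [Module R X] [Module.Free R X] [Module.Finite R X]
    (e : S.X₂ ≃ₗ[R] (R ⧸ m) ⊗[R] X) {p q b : ℕ}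
    (hp : Module.length R (LinearMap.range S.f.hom) = p)
    (hq : Module.length R (LinearMap.range S.g.hom) = q)
    (hb : Module.finrank R X = p + b + q) : Nonempty (S.homology ≃ₗ[R] (Fin b → R ⧸ m)) := by
  have htorsion : Module.IsTorsionBySet R S.X₂ (m : Set R) := by
    intro x a
    have ha : algebraMap R (R ⧸ m) a = 0 := Ideal.Quotient.eq_zero_iff_mem.2 a.2
    apply e.injective
    rw [map_smul, map_zero, algebra_compatible_smul (R ⧸ m), ha, zero_smul]
  refine nonempty_linearEquiv_pi_quotient (isTorsionBySet_homology S htorsion) ?_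
  have : Nontrivial R := (Ideal.Quotient.mk m).domain_nontrivial
  have hlength := length_homology_add S
  rw [hp, hq, e.length_eq, length_eq_finrank_quotient (m := m) ((R ⧸ m) ⊗[R] X),
    Module.finrank_baseChange, hb] at hlength
  push_cast at hlength
  exact ENat.add_right_injective_of_ne_top (ENat.natCast_ne_top p)
    (ENat.add_left_injective_of_ne_top (ENat.natCast_ne_top q) hlength)

variable [∀ i, Module.Free R (F i)] [∀ i, Module.Finite R (F i)] [m.IsMaximal]
  (hd : ∀ i, Function.Exact (d (i + 1)) (d i)) (hdε : Function.Exact (d 0) ε)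
  (hε : Function.Surjective ε)

include hd hdε hε

theorem hasBettiNumber_zero_of_exact {b : ℕ} (hb : Module.finrank R (F 0) =
    Module.finrank (R ⧸ m) (LinearMap.range ((d 0).baseChange (R ⧸ m))) + b) :
    HasBettiNumber m M 0 b := by
  let T := (MonoidalCategory.tensoringLeft (ModuleCat.{u} R)).obj (ModuleCat.of R (R ⧸ m))
  let C := (T.mapHomologicalComplex (ComplexShape.down ℕ)).obj (moduleChainComplex hd)
  let torIso := (moduleProjectiveResolution hd hdε hε).isoLeftDerivedObj T 0 ≪≫
    ShortComplex.homologyMapIso (C.isoSc' 1 0 0 (by simp) (by simp))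
  have hf : (C.sc' 1 0 0).f.hom = (d 0).lTensor (R ⧸ m) :=
    congrArg (fun f => (T.map f).hom) (moduleChainComplex_d hd 0)
  have hg : (C.sc' 1 0 0).g = 0 := C.shape _ _ (by simp)
  obtain ⟨e⟩ := nonempty_linearEquiv_homology (C.sc' 1 0 0)
    (LinearEquiv.refl R ((R ⧸ m) ⊗[R] F 0)) (hf ▸ length_range_lTensor_quotient (d 0))
    (q := 0) (by rw [hg, ModuleCat.hom_zero, LinearMap.range_zero]; simp) hb
  exact ⟨torIso.toLinearEquiv ≪≫ₗ e⟩

theorem hasBettiNumber_succ_of_exact {i b : ℕ} (hb : Module.finrank R (F (i + 1)) =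
    Module.finrank (R ⧸ m) (LinearMap.range ((d (i + 1)).baseChange (R ⧸ m))) + b +
      Module.finrank (R ⧸ m) (LinearMap.range ((d i).baseChange (R ⧸ m)))) :
    HasBettiNumber m M (i + 1) b := by
  let T := (MonoidalCategory.tensoringLeft (ModuleCat.{u} R)).obj (ModuleCat.of R (R ⧸ m))
  let C := (T.mapHomologicalComplex (ComplexShape.down ℕ)).obj (moduleChainComplex hd)
  let torIso := (moduleProjectiveResolution hd hdε hε).isoLeftDerivedObj T (i + 1) ≪≫
    ShortComplex.homologyMapIso (C.isoSc' (i + 2) (i + 1) i (by simp) (by simp))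
  have hf : (C.sc' (i + 2) (i + 1) i).f.hom = (d (i + 1)).lTensor (R ⧸ m) :=
    congrArg (fun f => (T.map f).hom) (moduleChainComplex_d hd (i + 1))
  have hg : (C.sc' (i + 2) (i + 1) i).g.hom = (d i).lTensor (R ⧸ m) :=
    congrArg (fun f => (T.map f).hom) (moduleChainComplex_d hd i)
  obtain ⟨e⟩ := nonempty_linearEquiv_homology (C.sc' (i + 2) (i + 1) i)
    (LinearEquiv.refl R ((R ⧸ m) ⊗[R] F (i + 1)))
    (hf ▸ length_range_lTensor_quotient (d (i + 1)))
    (hg ▸ length_range_lTensor_quotient (d i)) hb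
  exact ⟨torIso.toLinearEquiv ≪≫ₗ e⟩

end FreeResolution

end BettiNumbers

section Koszul

/-- The `i`-element subsets of a `j`-element set, by Pascal's recursion: those without and those
with the last element. They index the terms of the Koszul complex of `j` endomorphisms. -/
def KoszulIndex : ℕ → ℕ → Type
  | 0, 0 => Unit
  | 0, _ + 1 => Empty
  | j + 1, 0 => KoszulIndex j 0
  | j + 1, i + 1 => KoszulIndex j (i + 1) ⊕ KoszulIndex j i

namespace KoszulIndex

instance instUnique : ∀ j, Unique (KoszulIndex j 0)
  | 0 => inferInstanceAs (Unique Unit)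
  | j + 1 => instUnique j

instance instIsEmpty (i : ℕ) : IsEmpty (KoszulIndex 0 (i + 1)) :=
  inferInstanceAs (IsEmpty Empty)

instance instFintype : ∀ j i, Fintype (KoszulIndex j i)
  | 0, 0 => inferInstanceAs (Fintype Unit)
  | 0, _ + 1 => inferInstanceAs (Fintype Empty)
  | j + 1, 0 => instFintype j 0
  | j + 1, i + 1 =>
    let _ := instFintype j (i + 1)
    let _ := instFintype j i
    inferInstanceAs (Fintype (KoszulIndex j (i + 1) ⊕ KoszulIndex j i))

theorem card : ∀ j i, Fintype.card (KoszulIndex j i) = j.choose i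
  | 0, 0 => rfl
  | 0, _ + 1 => rfl
  | j + 1, 0 => (card j 0).trans (by rw [Nat.choose_zero_right, Nat.choose_zero_right])
  | j + 1, i + 1 => by
    rw [Nat.choose_succ_succ', ← card j i, ← card j (i + 1)]
    exact (Fintype.card_sum (α := KoszulIndex j (i + 1)) (β := KoszulIndex j i)).trans
      (Nat.add_comm _ _)

end KoszulIndex

variable {R : Type*} [CommRing R] {G : Type*} [AddCommGroup G] [Module R G]

variable (R G) in
/-- A cochain on the `(i + 1)`-subsets of `j + 1` points is a pair of cochains: its values on the
subsets without and with the last point. -/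
def koszulGlue (j i : ℕ) : ((KoszulIndex j (i + 1) → G) × (KoszulIndex j i → G)) ≃ₗ[R]
    (KoszulIndex (j + 1) (i + 1) → G) :=
  (LinearEquiv.sumArrowLequivProdArrow (KoszulIndex j (i + 1)) (KoszulIndex j i) R G).symm

theorem koszulGlue_comp {R' G' : Type*} [CommRing R'] [AddCommGroup G'] [Module R' G']
    (φ : G → G') {j i : ℕ} (a : KoszulIndex j (i + 1) → G) (b : KoszulIndex j i → G) :
    φ ∘ koszulGlue R G j i (a, b) = koszulGlue R' G' j i (φ ∘ a, φ ∘ b) := by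
  funext x
  cases x <;> rfl

/-- The differential `K_{i+1} → K_i` of the Koszul complex of a family `T` of (commuting)
endomorphisms of `G`, where `K_i` consists of the functions `KoszulIndex j i → G`. It is built as
the iterated mapping cone of the endomorphisms `T k`. -/
def koszulD : {j : ℕ} → (Fin j → Module.End R G) → (i : ℕ) →
    (KoszulIndex j (i + 1) → G) →ₗ[R] (KoszulIndex j i → G)
  | 0, _, _ => 0
  | j + 1, T, 0 => (koszulD (Fin.init T) 0).coprod ((T (Fin.last j)).compLeft _) ∘ₗ
      (koszulGlue R G j 0).symm.toLinearMap
  | j + 1, T, i + 1 => (koszulGlue R G j i).toLinearMap ∘ₗ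
      ((koszulD (Fin.init T) (i + 1)).coprod ((T (Fin.last j)).compLeft _)).prod
        (-koszulD (Fin.init T) i ∘ₗ LinearMap.snd R _ _) ∘ₗ
      (koszulGlue R G j (i + 1)).symm.toLinearMap

section Recursion

variable {j : ℕ} (T : Fin (j + 1) → Module.End R G)

theorem koszulD_zero_koszulGlue (a : KoszulIndex j 1 → G) (b : KoszulIndex j 0 → G) :
    koszulD T 0 (koszulGlue R G j 0 (a, b)) =
      koszulD (Fin.init T) 0 a + T (Fin.last j) ∘ b :=
  rfl

theorem koszulD_succ_koszulGlue (i : ℕ) (a : KoszulIndex j (i + 2) → G)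
    (b : KoszulIndex j (i + 1) → G) :
    koszulD T (i + 1) (koszulGlue R G j (i + 1) (a, b)) =
      koszulGlue R G j i
        (koszulD (Fin.init T) (i + 1) a + T (Fin.last j) ∘ b, -koszulD (Fin.init T) i b) :=
  rfl

theorem koszulD_succ_koszulGlue_eq_zero_iff (i : ℕ) (a : KoszulIndex j (i + 2) → G)
    (b : KoszulIndex j (i + 1) → G) :
    koszulD T (i + 1) (koszulGlue R G j (i + 1) (a, b)) = 0 ↔
      koszulD (Fin.init T) (i + 1) a + T (Fin.last j) ∘ b = 0 ∧ koszulD (Fin.init T) i b = 0 := by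
  rw [koszulD_succ_koszulGlue, LinearEquiv.map_eq_zero_iff, Prod.mk_eq_zero, neg_eq_zero]

end Recursion

theorem comp_koszulD {R' G' : Type*} [CommRing R'] [AddCommGroup G'] [Module R' G'] (φ : G →+ G') :
    ∀ {j : ℕ} (T : Fin j → Module.End R G) (T' : Fin j → Module.End R' G')
      (_ : ∀ k g, φ (T k g) = T' k (φ g)) (i : ℕ) (f : KoszulIndex j (i + 1) → G),
      φ ∘ koszulD T i f = koszulD T' i (φ ∘ f)
  | 0, _, _, _, i, f => by
    ext x
    simp [koszulD]
  | j + 1, T, T', h, 0, f => by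
    obtain ⟨⟨a, b⟩, rfl⟩ := (koszulGlue R G j 0).surjective f
    have ha := comp_koszulD φ (Fin.init T) (Fin.init T') (fun k => h k.castSucc) 0 a
    rw [koszulGlue_comp (R' := R'), koszulD_zero_koszulGlue, koszulD_zero_koszulGlue, ← ha]
    exact funext fun x => (map_add φ _ _).trans (congrArg _ (h (Fin.last j) (b x)))
  | j + 1, T, T', h, i + 1, f => by
    obtain ⟨⟨a, b⟩, rfl⟩ := (koszulGlue R G j (i + 1)).surjective f
    have hinit := comp_koszulD φ (Fin.init T) (Fin.init T') (fun k => h k.castSucc)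
    rw [koszulGlue_comp (R' := R'), koszulD_succ_koszulGlue, koszulD_succ_koszulGlue,
      koszulGlue_comp (R' := R'), ← hinit, ← hinit]
    congr 2
    · ext x
      simp [h]
    · ext x
      simp

theorem comp_koszulD_init {j : ℕ} {T : Fin (j + 1) → Module.End R G}
    (hT : Pairwise (Function.onFun Commute T)) (i : ℕ) (b : KoszulIndex j (i + 1) → G) :
    T (Fin.last j) ∘ koszulD (Fin.init T) i b = koszulD (Fin.init T) i (T (Fin.last j) ∘ b) :=
  comp_koszulD (T (Fin.last j)).toAddMonoidHom _ _
    (fun k g => LinearMap.congr_fun (hT (Fin.castSucc_lt_last k).ne') g) i b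

theorem koszulD_koszulD :
    ∀ {j : ℕ} {T : Fin j → Module.End R G} (_ : Pairwise (Function.onFun Commute T)) (i : ℕ)
      (f : KoszulIndex j (i + 2) → G), koszulD T i (koszulD T (i + 1) f) = 0
  | 0, _, _, _, _ => rfl
  | j + 1, T, hT, i, f => by
    obtain ⟨⟨a, b⟩, rfl⟩ := (koszulGlue R G j (i + 1)).surjective f
    have hinit := koszulD_koszulD (T := Fin.init T)
      (hT.comp_of_injective (Fin.castSucc_injective j))
    have hcancel : koszulD (Fin.init T) i (koszulD (Fin.init T) (i + 1) a + T (Fin.last j) ∘ b) +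
        T (Fin.last j) ∘ (-koszulD (Fin.init T) i b) = 0 := by
      rw [map_add, hinit, ← comp_koszulD_init hT]
      ext x
      simp
    rw [koszulD_succ_koszulGlue]
    cases i with
    | zero => exact hcancel
    | succ i =>
      exact (koszulD_succ_koszulGlue_eq_zero_iff T i _ _).2
        ⟨hcancel, by rw [map_neg, hinit, neg_zero]⟩

theorem mem_range_koszulD_zero_iff : ∀ {j : ℕ} (T : Fin j → Module.End R G)
    (f : KoszulIndex j 0 → G),
    f ∈ LinearMap.range (koszulD T 0) ↔ f default ∈ ⨆ k, LinearMap.range (T k)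
  | 0, T, f => by
    rw [iSup_of_empty, Submodule.mem_bot]
    exact ⟨fun ⟨_, h⟩ => h ▸ rfl, fun h => ⟨0, funext fun x => by
      rw [Unique.eq_default x, h, map_zero, Pi.zero_apply]⟩⟩
  | j + 1, T, f => by
    have hsup : ⨆ k, LinearMap.range (T k) =
        (⨆ k, LinearMap.range (Fin.init T k)) ⊔ LinearMap.range (T (Fin.last j)) :=
      le_antisymm (iSup_le <| Fin.lastCases le_sup_right
          fun k => (le_iSup (fun k => LinearMap.range (Fin.init T k)) k).trans le_sup_left)
        (sup_le (iSup_le fun k => le_iSup (fun k => LinearMap.range (T k)) k.castSucc)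
          (le_iSup (fun k => LinearMap.range (T k)) _))
    rw [hsup, Submodule.mem_sup]
    constructor
    · rintro ⟨h, rfl⟩
      obtain ⟨⟨a, b⟩, rfl⟩ := (koszulGlue R G j 0).surjective h
      exact ⟨_, (mem_range_koszulD_zero_iff _ _).1 ⟨a, rfl⟩, _, ⟨b default, rfl⟩, rfl⟩
    · rintro ⟨y, hy, _, ⟨z, rfl⟩, hz⟩
      obtain ⟨a, ha⟩ := (mem_range_koszulD_zero_iff (Fin.init T) fun _ => y).2 hy
      refine ⟨koszulGlue R G j 0 (a, fun _ => z), funext fun x => ?_⟩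
      rw [koszulD_zero_koszulGlue, ha, Unique.eq_default x]
      exact hz

/-- The family `T` of endomorphisms of `G` is weakly regular: each `T k` induces an injective map
on the cokernel of the preceding ones. -/
def IsWeaklyRegularFamily {j : ℕ} (T : Fin j → Module.End R G) : Prop :=
  ∀ (k : Fin j) (g : G), T k g ∈ ⨆ l : Fin k, LinearMap.range (T (l.castLE k.2.le)) →
    g ∈ ⨆ l : Fin k, LinearMap.range (T (l.castLE k.2.le))

theorem exact_koszulD : ∀ {j : ℕ} {T : Fin j → Module.End R G}
    (_ : Pairwise (Function.onFun Commute T)) (_ : IsWeaklyRegularFamily T) (i : ℕ),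
    Function.Exact (koszulD T (i + 1)) (koszulD T i)
  | 0, _, _, _, i => fun f => ⟨fun _ => ⟨0, Subsingleton.elim _ _⟩, fun _ => rfl⟩
  | j + 1, T, hcomm, hreg, i => fun f => by
    refine ⟨fun hf => ?_, fun ⟨g, hg⟩ => hg ▸ koszulD_koszulD hcomm i g⟩
    obtain ⟨⟨a, b⟩, rfl⟩ := (koszulGlue R G j i).surjective f
    have hinit := exact_koszulD (T := Fin.init T)
      (hcomm.comp_of_injective (Fin.castSucc_injective j)) (fun k => hreg k.castSucc)
    obtain ⟨hab, b', hb'⟩ : koszulD (Fin.init T) i a + T (Fin.last j) ∘ b = 0 ∧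
        b ∈ LinearMap.range (koszulD (Fin.init T) i) := by
      cases i with
      | zero =>
        refine ⟨hf, (mem_range_koszulD_zero_iff _ _).2 (hreg (Fin.last j) _ ?_)⟩
        exact (mem_range_koszulD_zero_iff (Fin.init T) (T (Fin.last j) ∘ b)).1
          ⟨-a, by rw [map_neg]; exact neg_eq_of_add_eq_zero_right hf⟩
      | succ i =>
        rw [koszulD_succ_koszulGlue_eq_zero_iff] at hf
        exact ⟨hf.1, (hinit i b).1 hf.2⟩
    obtain ⟨a', ha'⟩ := (hinit i (a + T (Fin.last j) ∘ b')).1 (by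
      rw [map_add, ← comp_koszulD_init hcomm, hb', hab])
    refine ⟨koszulGlue R G j (i + 1) (a', -b'), ?_⟩
    rw [koszulD_succ_koszulGlue, ha', map_neg, hb', neg_neg]
    congr 2
    ext x
    simp

theorem koszulD_koszulGlue_eq_zero_iff {j : ℕ} {T : Fin (j + 1) → Module.End R G}
    {P : Submodule R G} (hker : LinearMap.ker (T (Fin.last j)) = P)
    (hind : iSupIndep fun k => LinearMap.range (T k)) {i : ℕ}
    (hinit : ∀ i f, koszulD (Fin.init T) i f = 0 ↔ ∀ x, f x ∈ P)
    (a : KoszulIndex j (i + 1) → G) (b : KoszulIndex j i → G) :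
    koszulD T i (koszulGlue R G j i (a, b)) = 0 ↔
      koszulD (Fin.init T) i a = 0 ∧ T (Fin.last j) ∘ b = 0 := by
  cases i with
  | zero =>
    refine ⟨fun h => ?_, fun ⟨ha, hb⟩ => ?_⟩
    · have hsum : koszulD (Fin.init T) 0 a default + T (Fin.last j) (b default) = 0 :=
        congrFun h default
      have hdisj : Disjoint (LinearMap.range (T (Fin.last j)))
          (⨆ k, LinearMap.range (Fin.init T k)) :=
        (hind (Fin.last j)).mono_right <| iSup_le fun k =>
          le_iSup₂_of_le k.castSucc (Fin.castSucc_lt_last k).ne le_rfl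
      have hzero : T (Fin.last j) (b default) = 0 :=
        Submodule.disjoint_def.1 hdisj _ ⟨_, rfl⟩ <| by
          rw [← neg_eq_of_add_eq_zero_right hsum]
          exact neg_mem ((mem_range_koszulD_zero_iff _ _).1 ⟨a, rfl⟩)
      rw [hzero, add_zero] at hsum
      constructor <;> funext x <;> rw [Unique.eq_default x]
      exacts [hsum, hzero]
    · rw [koszulD_zero_koszulGlue, ha, hb]
      exact add_zero _
  | succ i =>
    rw [koszulD_succ_koszulGlue_eq_zero_iff]
    have hb : koszulD (Fin.init T) i b = 0 ↔ T (Fin.last j) ∘ b = 0 := by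
      simp only [hinit, funext_iff, ← hker, LinearMap.mem_ker, Function.comp_apply, Pi.zero_apply]
    rw [hb]
    exact and_congr_left fun h => by rw [h, add_zero]

theorem koszulD_eq_zero_iff : ∀ {j : ℕ} {T : Fin j → Module.End R G} {P : Submodule R G}
    (_ : ∀ k, LinearMap.ker (T k) = P) (_ : iSupIndep fun k => LinearMap.range (T k)) (i : ℕ)
    (f : KoszulIndex j (i + 1) → G), koszulD T i f = 0 ↔ ∀ x, f x ∈ P
  | 0, _, _, _, _, _, _ => ⟨fun _ x => isEmptyElim x, fun _ => rfl⟩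
  | j + 1, T, P, hker, hind, i, f => by
    obtain ⟨⟨a, b⟩, rfl⟩ := (koszulGlue R G j i).surjective f
    have hinit := koszulD_eq_zero_iff (T := Fin.init T) (fun k => hker k.castSucc)
      (hind.comp (Fin.castSucc_injective j))
    have hb : T (Fin.last j) ∘ b = 0 ↔ ∀ x, b x ∈ P := by
      simp only [funext_iff, ← hker (Fin.last j), LinearMap.mem_ker, Function.comp_apply,
        Pi.zero_apply]
    rw [koszulD_koszulGlue_eq_zero_iff (hker _) hind hinit, hinit, hb]
    exact (Sum.forall (α := KoszulIndex j (i + 1)) (β := KoszulIndex j i)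
      (p := fun x => koszulGlue R G j i (a, b) x ∈ P)).symm

theorem finrank_range_koszulD {κ V : Type*} [Field κ] [AddCommGroup V] [Module κ V]
    [Module.Finite κ V] {j : ℕ} {T : Fin j → Module.End κ V} {P : Submodule κ V}
    (hker : ∀ k, LinearMap.ker (T k) = P) (hind : iSupIndep fun k => LinearMap.range (T k))
    (i : ℕ) : Module.finrank κ (LinearMap.range (koszulD T i)) =
      j.choose (i + 1) * Module.finrank κ (V ⧸ P) := by
  classical
  have hpi : LinearMap.ker (koszulD T i) = Submodule.pi Set.univ fun _ => P := by
    ext f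
    simp [koszulD_eq_zero_iff hker hind]
  rw [← (koszulD T i).quotKerEquivRange.finrank_eq, hpi,
    (Submodule.quotientPi fun _ => P).finrank_eq, Module.finrank_pi_fintype, Finset.sum_const,
    Finset.card_univ, KoszulIndex.card, smul_eq_mul]

theorem finrank_range_baseChange_koszulD {j : ℕ} (T : Fin j → Module.End R G) (A : Type*)
    [CommRing A] [Algebra R A] (i : ℕ) :
    Module.finrank A (LinearMap.range ((koszulD T i).baseChange A)) =
      Module.finrank A (LinearMap.range (koszulD (fun k => (T k).baseChange A) i)) := by
  classical
  let e (i : ℕ) := TensorProduct.piRight R A A fun _ : KoszulIndex j i => G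
  have hconj : koszulD (fun k => (T k).baseChange A) i ∘ₗ (e (i + 1)).toLinearMap =
      (e i).toLinearMap ∘ₗ (koszulD T i).baseChange A := by
    refine TensorProduct.AlgebraTensorModule.ext fun a f => ?_
    have hmk (i : ℕ) (f : KoszulIndex j i → G) :
        e i (a ⊗ₜ f) = (TensorProduct.mk R A G a).toAddMonoidHom ∘ f :=
      TensorProduct.piRight_apply ..
    rw [LinearMap.comp_apply, LinearMap.comp_apply, LinearEquiv.coe_coe, LinearEquiv.coe_coe,
      LinearMap.baseChange_tmul, hmk, hmk]
    exact (comp_koszulD _ T _ (fun k g => ((T k).baseChange_tmul a g).symm) i f).symm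
  rw [← (e i).finrank_map_eq, ← LinearMap.range_comp, ← hconj,
    LinearMap.range_comp_of_range_eq_top _ (e (i + 1)).range]

end Koszul

section LinearStrand

theorem finrank_range_koszulD_smulRight {κ V : Type*} [Field κ] [AddCommGroup V] [Module κ V]
    {N : ℕ} (b : Module.Basis (Fin (N + 1)) κ V) (i : ℕ) :
    Module.finrank κ (LinearMap.range
      (koszulD (fun k : Fin N => (b.coord 0).smulRight (b k.succ)) i)) = N.choose (i + 1) := by
  have : Module.Finite κ V := b.finiteDimensional_of_finite
  have hker (k : Fin N) :
      LinearMap.ker ((b.coord 0).smulRight (b k.succ)) = LinearMap.ker (b.coord 0) := by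
    ext v
    simp [b.ne_zero]
  have hind : iSupIndep fun k : Fin N => LinearMap.range ((b.coord 0).smulRight (b k.succ)) :=
    ((b.linearIndependent.comp _ (Fin.succ_injective N)).iSupIndep_span_singleton).mono
      fun k => LinearMap.range_le_iff_comap.2 <| by
        ext v
        simp [Submodule.smul_mem _ _ (Submodule.mem_span_singleton_self _)]
  have hsurj : Function.Surjective (b.coord 0) := fun c => ⟨c • b 0, by simp⟩
  rw [finrank_range_koszulD hker hind,
    ((b.coord 0).quotKerEquivOfSurjective hsurj).finrank_eq, Module.finrank_self, mul_one]

variable {R : Type u} [CommRing R] {m : Ideal R} {G : Type u} [AddCommGroup G] [Module R G]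
  {N : ℕ} {T : Fin N → Module.End R G}

theorem baseChange_quotient_eq_smulRight (b : Module.Basis (Fin (N + 1)) R G)
    {f : Module.End R G} {k : Fin N} (hzero : f (b 0) - b k.succ ∈ m • (⊤ : Submodule R G))
    (hsucc : ∀ l : Fin N, f (b l.succ) ∈ m • (⊤ : Submodule R G)) :
    f.baseChange (R ⧸ m) = ((Algebra.TensorProduct.basis (R ⧸ m) b).coord 0).smulRight
      (Algebra.TensorProduct.basis (R ⧸ m) b k.succ) := by
  have htmul {g : G} (hg : g ∈ m • (⊤ : Submodule R G)) : (1 : R ⧸ m) ⊗ₜ[R] g = 0 := by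
    rwa [← (TensorProduct.quotTensorEquivQuotSMul G m).map_eq_zero_iff,
      TensorProduct.quotTensorEquivQuotSMul_mk_one_tmul, Submodule.Quotient.mk_eq_zero]
  refine (Algebra.TensorProduct.basis (R ⧸ m) b).ext (Fin.cases ?_ fun l => ?_)
  · rw [LinearMap.smulRight_apply]
    simpa [TensorProduct.tmul_sub, sub_eq_zero] using htmul hzero
  · simpa [Finsupp.single_apply] using htmul (hsucc l)

theorem hasBettiNumber_of_koszul [m.IsMaximal] {M : Type u} [AddCommGroup M] [Module R M]
    (hcomm : Pairwise (Function.onFun Commute T)) (hreg : IsWeaklyRegularFamily T)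
    {ε : G →ₗ[R] M} (hε : Function.Surjective ε)
    (hker : LinearMap.ker ε = ⨆ k, LinearMap.range (T k)) (b : Module.Basis (Fin (N + 1)) R G)
    (hzero : ∀ k, T k (b 0) - b k.succ ∈ m • (⊤ : Submodule R G))
    (hsucc : ∀ k l : Fin N, T k (b l.succ) ∈ m • (⊤ : Submodule R G)) (i : ℕ) :
    HasBettiNumber m M i (if i = 0 then 1 else i * (N + 1).choose (i + 1)) := by
  have : Module.Free R G := .of_basis b
  have : Module.Finite R G := .of_basis b
  have : Nontrivial R := (Ideal.Quotient.mk m).domain_nontrivial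
  have hrank (i : ℕ) : Module.finrank (R ⧸ m)
      (LinearMap.range ((koszulD T i).baseChange (R ⧸ m))) = N.choose (i + 1) := by
    let _ := Ideal.Quotient.field m
    rw [finrank_range_baseChange_koszulD, funext fun k =>
      baseChange_quotient_eq_smulRight b (hzero k) (hsucc k)]
    exact finrank_range_koszulD_smulRight _ i
  have hfinrank (i : ℕ) : Module.finrank R (KoszulIndex N i → G) = N.choose i * (N + 1) := by
    rw [Module.finrank_pi_fintype, Finset.sum_const, Finset.card_univ, KoszulIndex.card,
      smul_eq_mul, Module.finrank_eq_card_basis b, Fintype.card_fin]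
  let ε' : (KoszulIndex N 0 → G) →ₗ[R] M := ε ∘ₗ LinearMap.proj default
  have hexact : Function.Exact (koszulD T 0) ε' := fun f => by
    rw [← LinearMap.coe_range, SetLike.mem_coe, mem_range_koszulD_zero_iff, ← hker]
    rfl
  have hsurj : Function.Surjective ε' := hε.comp (Function.surjective_eval _)
  cases i with
  | zero =>
    refine hasBettiNumber_zero_of_exact (F := fun i => KoszulIndex N i → G) (d := koszulD T)
      (exact_koszulD hcomm hreg) hexact hsurj ?_
    rw [hrank, hfinrank]
    simp
  | succ i =>
    refine hasBettiNumber_succ_of_exact (F := fun i => KoszulIndex N i → G) (d := koszulD T)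
      (exact_koszulD hcomm hreg) hexact hsurj ?_
    rw [hrank, hrank, hfinrank, if_neg i.succ_ne_zero]
    have h₁ := Nat.add_one_mul_choose_eq N (i + 1)
    have h₂ := Nat.choose_succ_succ' N (i + 1)
    nlinarith

end LinearStrand

section FiniteFree

theorem mem_span_X_image_of_X_mul_mem {σ A : Type*} [CommRing A] {s : Set σ} {k : σ} (hk : k ∉ s)
    {p : MvPolynomial σ A} (hp : X k * p ∈ Ideal.span (X '' s : Set (MvPolynomial σ A))) :
    p ∈ Ideal.span (X '' s : Set (MvPolynomial σ A)) := by
  classical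
  rw [mem_ideal_span_X_image] at hp ⊢
  intro u hu
  obtain ⟨l, hl, hul⟩ := hp (Finsupp.single k 1 + u) <| by
    rwa [mem_support_iff, coeff_X_mul, ← mem_support_iff]
  refine ⟨l, hl, ?_⟩
  rwa [Finsupp.add_apply, Finsupp.single_eq_of_ne (ne_of_mem_of_not_mem hl hk), zero_add] at hul

theorem iSup_range_mulLeft (R : Type*) {S ι : Type*} [CommRing R] [CommRing S] [Algebra R S]
    [Finite ι] (t : ι → S) : ⨆ k, LinearMap.range (LinearMap.mulLeft R (t k)) =
      (Ideal.span (Set.range t)).restrictScalars R := by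
  have := Fintype.ofFinite ι
  refine le_antisymm (iSup_le fun k => ?_) fun x hx => ?_
  · rintro _ ⟨x, rfl⟩
    exact Ideal.mul_mem_right _ _ (Ideal.subset_span ⟨k, rfl⟩)
  · obtain ⟨c, rfl⟩ := Ideal.mem_span_range_iff_exists_fun.1 hx
    exact sum_mem fun k _ => le_iSup (fun k => LinearMap.range (LinearMap.mulLeft R (t k))) k
      ⟨c k, mul_comm _ _⟩

theorem isWeaklyRegularFamily_mulLeft {R S A : Type*} [CommRing R] [CommRing S] [Algebra R S]
    [CommRing A] {N : ℕ} {t : Fin N → S} (e : S ≃+* MvPolynomial (Fin N) A)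
    (he : ∀ k, e (t k) = X k) : IsWeaklyRegularFamily fun k => LinearMap.mulLeft R (t k) := by
  intro k x hx
  have hmem (x : S) : x ∈ Ideal.span (Set.range fun l : Fin k => t (l.castLE k.2.le)) ↔
      e x ∈ Ideal.span (X '' (Set.range (Fin.castLE k.2.le : Fin k → Fin N))) := by
    rw [← Ideal.comap_map_of_bijective e e.bijective (I := .span _), Ideal.map_span,
      Ideal.mem_comap, ← Set.range_comp, ← Set.range_comp]
    simp only [Function.comp_def, he]
  have hk : k ∉ Set.range (Fin.castLE k.2.le : Fin k → Fin N) := by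
    rintro ⟨l, hl⟩
    exact l.2.ne (congrArg Fin.val hl)
  rw [iSup_range_mulLeft, Submodule.restrictScalars_mem, hmem] at hx ⊢
  rw [LinearMap.mulLeft_apply, map_mul, he] at hx
  exact mem_span_X_image_of_X_mul_mem hk hx

variable {B : Type v} {R A : Type u} [CommRing B] [CommRing R] [CommRing A] [Algebra B R]
  [Algebra R A] [Algebra B A]

variable (B A) in
/-- The element `1 ⊗ r - r ⊗ 1` of `R ⊗[B] A`. If `R` is a polynomial ring over `B`, then those
attached to the variables form a regular sequence which cuts `A` out of `R ⊗[B] A`. -/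
def tensorDiff (r : R) : R ⊗[B] A := 1 ⊗ₜ algebraMap R A r - r ⊗ₜ 1

theorem exists_algEquiv_tensorDiff {N : ℕ} {y : Fin N → R}
    (hy : Function.Bijective (aeval y : MvPolynomial (Fin N) B →ₐ[B] R)) :
    ∃ e : R ⊗[B] A ≃ₐ[B] MvPolynomial (Fin N) A, ∀ k, e (tensorDiff B A (y k)) = X k := by
  let e₁ : R ⊗[B] A ≃ₐ[B] MvPolynomial (Fin N) A :=
    (Algebra.TensorProduct.comm B R A).trans <|
      (Algebra.TensorProduct.congr .refl (AlgEquiv.ofBijective _ hy).symm).trans <|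
        (algebraTensorAlgEquiv B A).restrictScalars B
  let σ : MvPolynomial (Fin N) A →ₐ[A] MvPolynomial (Fin N) A :=
    aeval fun k => C (algebraMap R A (y k)) - X k
  have hσ : σ.comp σ = .id A _ := by
    ext k
    simp [σ]
  have hX (k : Fin N) : (AlgEquiv.ofBijective _ hy).symm (y k) = X k := by
    rw [AlgEquiv.symm_apply_eq, AlgEquiv.ofBijective_apply, aeval_X]
  refine ⟨e₁.trans ((AlgEquiv.ofAlgHom σ σ hσ hσ).restrictScalars B), fun k => ?_⟩
  have hone : y k • (1 : MvPolynomial (Fin N) A) = C (algebraMap R A (y k)) := by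
    rw [Algebra.smul_def, mul_one, MvPolynomial.algebraMap_apply]
  simp [e₁, tensorDiff, hX, σ, hone]

variable [IsScalarTower B R A]

theorem ker_productLeft_eq_span_tensorDiff {N : ℕ} {y : Fin N → R}
    (hy : Function.Surjective (aeval y : MvPolynomial (Fin N) B →ₐ[B] R)) :
    RingHom.ker (Algebra.TensorProduct.productLeftAlgHom (Algebra.ofId R A) (AlgHom.id B A)) =
      Ideal.span (Set.range fun k => tensorDiff B A (y k)) := by
  set J := Ideal.span (Set.range fun k => tensorDiff B A (y k))
  refine le_antisymm (fun z hz => ?_) (Ideal.span_le.2 ?_)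
  · have hcomp : (Ideal.Quotient.mkₐ B J).comp Algebra.TensorProduct.includeLeft =
        ((Ideal.Quotient.mkₐ B J).comp Algebra.TensorProduct.includeRight).comp
          (IsScalarTower.toAlgHom B R A) := by
      refine (AlgHom.cancel_right hy).1 (algHom_ext fun k => ?_)
      have hk : -tensorDiff B A (y k) ∈ J := neg_mem (Ideal.subset_span ⟨k, rfl⟩)
      simpa [Ideal.Quotient.eq, tensorDiff] using hk
    have hmk (z : R ⊗[B] A) : Ideal.Quotient.mk J z = Ideal.Quotient.mk J
        (1 ⊗ₜ Algebra.TensorProduct.productLeftAlgHom (Algebra.ofId R A) (AlgHom.id B A) z) := by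
      induction z with
      | zero => simp
      | add z₁ z₂ h₁ h₂ => rw [map_add, h₁, h₂, map_add, TensorProduct.tmul_add, map_add]
      | tmul r a =>
        have hr : Ideal.Quotient.mk J (r ⊗ₜ 1) = Ideal.Quotient.mk J (1 ⊗ₜ algebraMap R A r) :=
          DFunLike.congr_fun hcomp r
        calc Ideal.Quotient.mk J (r ⊗ₜ a)
            = Ideal.Quotient.mk J (r ⊗ₜ 1) * Ideal.Quotient.mk J (1 ⊗ₜ a) := by
              rw [← map_mul, Algebra.TensorProduct.tmul_mul_tmul, mul_one, one_mul]
          _ = Ideal.Quotient.mk J (1 ⊗ₜ (algebraMap R A r * a)) := by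
              rw [hr, ← map_mul, Algebra.TensorProduct.tmul_mul_tmul, one_mul]
          _ = _ := rfl
    rw [← Ideal.Quotient.eq_zero_iff_mem, hmk, RingHom.mem_ker.1 hz, TensorProduct.tmul_zero,
      map_zero]
  · rintro _ ⟨k, rfl⟩
    simp [tensorDiff, Algebra.ofId_apply]

theorem hasBettiNumber_of_basis {N : ℕ} {m : Ideal R} [m.IsMaximal] {y : Fin N → R}
    (hy : Function.Bijective (aeval y : MvPolynomial (Fin N) B →ₐ[B] R)) (hym : ∀ k, y k ∈ m)
    (c : Module.Basis (Fin (N + 1)) B A) (hc₀ : c 0 = 1)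
    (hc : ∀ k : Fin N, c k.succ = algebraMap R A (y k))
    (hmul : ∀ k l : Fin N, c k.succ * c l.succ ∈
      m.comap (algebraMap B R) • (⊤ : Submodule B A)) (i : ℕ) :
    HasBettiNumber m A i (if i = 0 then 1 else i * (N + 1).choose (i + 1)) := by
  let ε := Algebra.TensorProduct.productLeftAlgHom (Algebra.ofId R A) (AlgHom.id B A)
  obtain ⟨e, he⟩ := exists_algEquiv_tensorDiff (A := A) hy
  have htmul {x : A} (hx : x ∈ m.comap (algebraMap B R) • (⊤ : Submodule B A)) :
      (1 : R) ⊗ₜ[B] x ∈ m • (⊤ : Submodule R (R ⊗[B] A)) := by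
    refine Submodule.smul_induction_on hx (fun s hs x _ => ?_) fun x x' hx hx' => ?_
    · rw [TensorProduct.tmul_smul, ← algebraMap_smul R (M := R ⊗[B] A)]
      exact Submodule.smul_mem_smul hs trivial
    · rw [TensorProduct.tmul_add]
      exact add_mem hx hx'
  have hsmul (k : Fin N) (x : A) : y k ⊗ₜ[B] x ∈ m • (⊤ : Submodule R (R ⊗[B] A)) := by
    rw [← mul_one (y k), ← smul_eq_mul, ← TensorProduct.smul_tmul']
    exact Submodule.smul_mem_smul (hym k) trivial
  refine hasBettiNumber_of_koszul (T := fun k => LinearMap.mulLeft R (tensorDiff B A (y k)))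
    (fun k l _ => (Commute.all (tensorDiff B A (y k)) _).map (Algebra.lmul R (R ⊗[B] A)))
    (isWeaklyRegularFamily_mulLeft e.toRingEquiv he) (ε := ε.toLinearMap)
    (fun x => ⟨1 ⊗ₜ x, by simp [ε]⟩) ?_ (Algebra.TensorProduct.basis R c) (fun k => ?_)
    (fun k l => ?_) i
  · rw [iSup_range_mulLeft, ← ker_productLeft_eq_span_tensorDiff hy.surjective]
    rfl
  · rw [Algebra.TensorProduct.basis_apply, Algebra.TensorProduct.basis_apply, hc₀, hc,
      LinearMap.mulLeft_apply, ← Algebra.TensorProduct.one_def, mul_one, tensorDiff,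
      sub_sub_cancel_left]
    exact neg_mem (hsmul k 1)
  · rw [Algebra.TensorProduct.basis_apply, LinearMap.mulLeft_apply, tensorDiff, sub_mul,
      Algebra.TensorProduct.tmul_mul_tmul, Algebra.TensorProduct.tmul_mul_tmul, one_mul, mul_one,
      one_mul, ← hc]
    exact sub_mem (htmul (hmul k l)) (hsmul k _)

end FiniteFree

section QuadraticQuotient

theorem linearIndependent_of_graded {A B D Γ κ : Type*} [CommRing A] [CommRing B] [Algebra B A]
    [CommRing D] [IsDomain D] [AddMonoid Γ] {β : B →+* D} (hβ : Function.Injective β)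
    {τ : A →+* AddMonoidAlgebra D Γ}
    (hτ : ∀ b, τ (algebraMap B A b) = AddMonoidAlgebra.single 0 (β b)) {v : κ → A} {γ : κ → Γ}
    {d : κ → D} (hv : ∀ k, τ (v k) = AddMonoidAlgebra.single (γ k) (d k))
    (hγ : Function.Injective γ) (hd : ∀ k, d k ≠ 0) : LinearIndependent B v := by
  classical
  refine linearIndependent_iff'.2 fun s g hg k hk => ?_
  have hsum : ∑ l ∈ s, AddMonoidAlgebra.single (γ l) (β (g l) * d l) = 0 := by
    rw [← map_zero τ, ← hg, map_sum]
    refine Finset.sum_congr rfl fun l _ => ?_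
    rw [Algebra.smul_def, map_mul, hτ, hv, AddMonoidAlgebra.single_mul_single, zero_add]
  have hcoeff : β (g k) * d k = 0 := by
    simpa [Finsupp.finsetSum_apply, Finsupp.single_apply, hγ.eq_iff, hk] using
      congrArg (fun x => x.coeff (γ k)) hsum
  exact (map_eq_zero_iff β hβ).1 ((mul_eq_zero.1 hcoeff).resolve_right (hd k))

variable {K : Type u} [Field K] {ι : Type v}

theorem isMaximal_span_range_X :
    (Ideal.span (Set.range X) : Ideal (MvPolynomial ι K)).IsMaximal := by
  have hker : Ideal.span (Set.range X) = RingHom.ker (constantCoeff : MvPolynomial ι K →+* K) := by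
    ext p
    rw [← Set.image_univ, mem_ideal_span_X_image, RingHom.mem_ker, constantCoeff_eq,
      ← notMem_support_iff]
    simp only [Set.mem_univ, true_and]
    exact ⟨fun h h₀ => (h 0 h₀).elim fun _ hi => hi rfl,
      fun h u hu => Finsupp.ne_iff.1 (ne_of_mem_of_not_mem hu h)⟩
  rw [hker]
  exact RingHom.ker_isMaximal_of_surjective _ fun r => ⟨C r, constantCoeff_C ι r⟩

theorem bijective_aeval_X_supported {κ : Type*} {s : Set ι} {y : κ → ι}
    (hy : Function.Injective y) (hrange : Set.range y = sᶜ) :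
    Function.Bijective (aeval fun k => X (y k) :
      MvPolynomial κ (supported K s) →ₐ[supported K s] MvPolynomial ι K) := by
  constructor
  · have hmem (k : κ) : y k ∈ sᶜ := hrange ▸ Set.mem_range_self k
    exact ((algebraicIndependent_X ι K).adjoin_of_disjoint
      (disjoint_compl_right (a := s))).comp (fun k => ⟨y k, hmem k⟩)
        fun _ _ h => hy (congrArg Subtype.val h)
  · rw [← AlgHom.range_eq_top]
    have hX (i : ι) : X i ∈ (aeval fun k => X (y k) :
        MvPolynomial κ (supported K s) →ₐ[supported K s] MvPolynomial ι K).range := by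
      by_cases hi : i ∈ s
      · exact Subalgebra.algebraMap_mem _ (⟨X i, X_mem_supported.2 hi⟩ : supported K s)
      · obtain ⟨k, rfl⟩ : i ∈ Set.range y := hrange ▸ hi
        exact ⟨X k, aeval_X _ k⟩
    refine eq_top_iff.2 fun p _ => ?_
    rw [← Subalgebra.mem_restrictScalars K]
    exact (eq_top_iff.1 (adjoin_range_X (R := K))).trans
      (Algebra.adjoin_le (Set.range_subset_iff.2 hX)) trivial

variable {D Γ : Type*} [CommRing D] [Algebra K D] [AddCommMonoid Γ]

/-- The `K`-algebra homomorphism to the monoid algebra `D[Γ]` which sends the `i`-th variable to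
the homogeneous element `d i` of degree `γ i`. -/
def gradedEval (γ : ι → Γ) (d : ι → D) : MvPolynomial ι K →ₐ[K] AddMonoidAlgebra D Γ :=
  aeval fun i => AddMonoidAlgebra.single (γ i) (d i)

theorem gradedEval_X (γ : ι → Γ) (d : ι → D) (i : ι) :
    gradedEval γ d (X i : MvPolynomial ι K) = AddMonoidAlgebra.single (γ i) (d i) :=
  aeval_X _ i

theorem gradedEval_supported {γ : ι → Γ} (d : ι → D) {s : Set ι} (hγ : ∀ i ∈ s, γ i = 0)
    (b : supported K s) :
    gradedEval γ d (b : MvPolynomial ι K) =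
      AddMonoidAlgebra.single 0 (aeval d (b : MvPolynomial ι K)) := by
  have hX : Set.EqOn (gradedEval γ d)
      ((AddMonoidAlgebra.singleZeroAlgHom (R := K)).comp (aeval d)) (X '' s) := by
    rintro _ ⟨i, hi, rfl⟩
    simp [gradedEval_X, hγ i hi]
  exact AlgHom.eqOn_adjoin_iff.2 hX b.2

theorem injective_aeval_supported {d : ι → D} {s : Set ι}
    (hd : AlgebraicIndependent K fun i : s => d i) :
    Function.Injective ((aeval d).comp (supported K s).val : supported K s →ₐ[K] D) := by
  refine (injective_iff_map_eq_zero _).2 fun b hb => ?_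
  obtain ⟨p, hp⟩ : (b : MvPolynomial ι K) ∈ (rename ((↑) : s → ι)).range := by
    rw [← supported_eq_range_rename]
    exact b.2
  have haeval : aeval (fun i : s => d i) p = 0 :=
    (aeval_rename _ d p).symm.trans ((congrArg (aeval d) hp).trans hb)
  refine Subtype.ext (hp.symm.trans ?_)
  rw [(injective_iff_map_eq_zero _).1 hd p haeval, map_zero, ZeroMemClass.coe_zero]

section Basis

variable {I : Ideal (MvPolynomial ι K)} {s : Set ι} {N : ℕ} {y : Fin N → ι}

theorem eq_top_of_mul_mk_X_mem {W : Submodule (supported K s) (MvPolynomial ι K ⧸ I)} (hone : 1 ∈ W)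
    (hmul : ∀ j, ∀ w ∈ W, w * Ideal.Quotient.mk I (X j) ∈ W) : W = ⊤ := by
  refine eq_top_iff.2 fun w _ => ?_
  obtain ⟨p, rfl⟩ := Ideal.Quotient.mk_surjective w
  induction p using MvPolynomial.induction_on with
  | C r =>
    have hr := W.smul_mem (algebraMap K (supported K s) r) hone
    exact (congrArg (Ideal.Quotient.mk I) (mul_one (C r))) ▸ hr
  | add p q hp hq => rw [map_add]; exact W.add_mem (hp trivial) (hq trivial)
  | mul_X p j hp => rw [map_mul]; exact hmul j _ (hp trivial)

theorem span_range_cons_mk_eq_top (hrange : Set.range y = sᶜ)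
    (hrel : ∀ k l, ∃ i ∈ s, ∃ j, X (y k) * X (y l) - X i * X j ∈ I) :
    Submodule.span (supported K s) (Set.range (Fin.cons 1 fun k => Ideal.Quotient.mk I (X (y k)) :
      Fin (N + 1) → MvPolynomial ι K ⧸ I)) = ⊤ := by
  set v : Fin (N + 1) → MvPolynomial ι K ⧸ I := Fin.cons 1 fun k => Ideal.Quotient.mk I (X (y k))
  set W := Submodule.span (supported K s) (Set.range v)
  have hv (o : Fin (N + 1)) : v o ∈ W := Submodule.subset_span ⟨o, rfl⟩
  have hs {i : ι} (hi : i ∈ s) {w : MvPolynomial ι K ⧸ I} (hw : w ∈ W) :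
      Ideal.Quotient.mk I (X i) * w ∈ W :=
    W.smul_mem (⟨X i, X_mem_supported.2 hi⟩ : supported K s) hw
  have hX (j : ι) : Ideal.Quotient.mk I (X j) ∈ W := by
    by_cases hj : j ∈ s
    · rw [← mul_one (Ideal.Quotient.mk I (X j))]
      exact hs hj (hv 0)
    · obtain ⟨k, rfl⟩ : j ∈ Set.range y := hrange ▸ hj
      exact hv k.succ
  refine eq_top_of_mul_mk_X_mem (hv 0) fun j w hw => ?_
  by_cases hj : j ∈ s
  · rw [mul_comm]
    exact hs hj hw
  obtain ⟨k, rfl⟩ : j ∈ Set.range y := hrange ▸ hj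
  induction hw using Submodule.span_induction with
  | zero => rw [zero_mul]; exact W.zero_mem
  | add w w' _ _ h h' => rw [add_mul]; exact W.add_mem h h'
  | smul b w _ h => rw [smul_mul_assoc]; exact W.smul_mem b h
  | mem w hw =>
    obtain ⟨o, rfl⟩ := hw
    refine Fin.cases ?_ (fun l => ?_) o
    · exact (one_mul (Ideal.Quotient.mk I (X (y k)))).symm ▸ hX (y k)
    · obtain ⟨i, hi, j, hij⟩ := hrel l k
      have hprod := hs hi (hX j)
      rwa [← map_mul, ← Ideal.Quotient.eq.2 hij, map_mul] at hprod

variable [IsDomain D]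

theorem linearIndependent_cons_mk {γ : ι → Γ} {d : ι → D} (hI : I ≤ RingHom.ker (gradedEval γ d))
    (hγs : ∀ i ∈ s, γ i = 0) (hds : AlgebraicIndependent K fun i : s => d i)
    (hγy : Function.Injective (Fin.cons 0 fun k => γ (y k) : Fin (N + 1) → Γ))
    (hdy : ∀ k, d (y k) ≠ 0) :
    LinearIndependent (supported K s) (Fin.cons 1 fun k => Ideal.Quotient.mk I (X (y k)) :
      Fin (N + 1) → MvPolynomial ι K ⧸ I) := by
  refine linearIndependent_of_graded (β := ((aeval d).comp (supported K s).val).toRingHom)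
    (injective_aeval_supported hds) (τ := Ideal.Quotient.lift I (gradedEval γ d).toRingHom hI)
    (gradedEval_supported d hγs) (d := Fin.cons 1 fun k => d (y k)) ?_ hγy ?_
  · refine Fin.cases (map_one _) fun k => ?_
    exact gradedEval_X γ d (y k)
  · exact Fin.cases one_ne_zero hdy

theorem hasBettiNumber_quotient (hy : Function.Injective y) (hrange : Set.range y = sᶜ)
    (hrel : ∀ k l, ∃ i ∈ s, ∃ j, X (y k) * X (y l) - X i * X j ∈ I) {γ : ι → Γ} {d : ι → D}
    (hI : I ≤ RingHom.ker (gradedEval γ d))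
    (hγs : ∀ i ∈ s, γ i = 0) (hds : AlgebraicIndependent K fun i : s => d i)
    (hγy : Function.Injective (Fin.cons 0 fun k => γ (y k) : Fin (N + 1) → Γ))
    (hdy : ∀ k, d (y k) ≠ 0) (i : ℕ) :
    HasBettiNumber (Ideal.span (Set.range X) : Ideal (MvPolynomial ι K)) (MvPolynomial ι K ⧸ I) i
      (if i = 0 then 1 else i * (N + 1).choose (i + 1)) := by
  have := isMaximal_span_range_X (K := K) (ι := ι)
  have hmem (i : ι) : (X i : MvPolynomial ι K) ∈ Ideal.span (Set.range X) :=
    Ideal.subset_span ⟨i, rfl⟩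
  let c := Module.Basis.mk (linearIndependent_cons_mk hI hγs hds hγy hdy)
    (span_range_cons_mk_eq_top hrange hrel).ge
  have hc₀ : c 0 = 1 := Module.Basis.mk_apply ..
  have hc (k : Fin N) : c k.succ = Ideal.Quotient.mk I (X (y k)) := Module.Basis.mk_apply ..
  have haeval := bijective_aeval_X_supported (K := K) hy hrange
  refine hasBettiNumber_of_basis (B := supported K s) haeval (fun k => hmem (y k)) c hc₀ hc
    (fun k l => ?_) i
  obtain ⟨i, hi, j, hij⟩ := hrel k l
  have hXi : (⟨X i, X_mem_supported.2 hi⟩ : supported K s) ∈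
      (Ideal.span (Set.range X)).comap (algebraMap (supported K s) (MvPolynomial ι K)) := hmem i
  rw [hc, hc, ← map_mul, Ideal.Quotient.eq.2 hij, map_mul]
  exact Submodule.smul_mem_smul hXi (Submodule.mem_top (x := Ideal.Quotient.mk I (X j)))

end Basis

end QuadraticQuotient

section Cycle

theorem fin_induction_add_one {n : ℕ} [NeZero n] {p : Fin n → Prop} (hzero : p 0)
    (hadd : ∀ a, p a → p (a + 1)) (a : Fin n) : p a := by
  obtain ⟨N, rfl⟩ := Nat.exists_eq_succ_of_ne_zero (NeZero.ne n)
  exact Fin.induction hzero (fun i hi => Fin.coeSucc_eq_succ (a := i) ▸ hadd _ hi) a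

theorem apply_add_apply_of_apply_add_one_add_one {n : ℕ} [NeZero n] {V : Type*} [AddCommGroup V]
    {f : Fin n → V} (hf : ∀ a, f (a + 1 + 1) + f a = (2 : ℤ) • f (a + 1)) (a b : Fin n) :
    f a + f b = f 0 + f (a + b) := by
  have hstep : ∀ c, f (c + 1) = f c + (f (0 + 1) - f 0) := by
    refine fin_induction_add_one (by abel) fun c hc => ?_
    rw [eq_sub_of_add_eq (hf c), ← sub_eq_iff_eq_add'.2 hc]
    module
  induction b using fin_induction_add_one with
  | hzero => rw [add_zero, add_comm]
  | hadd b hb => rw [← add_assoc a, hstep, hstep (a + b), ← add_assoc, hb, add_assoc]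

theorem cycLap_add_one {n : ℕ} [NeZero n] (hn : 3 ≤ n) (a : Fin n) :
    cycLap n (a + 1) =
      (2 : ℤ) • Pi.single (a + 1) 1 - Pi.single (a + 1 + 1) 1 - Pi.single a (1 : ℤ) := by
  obtain ⟨N, rfl⟩ := Nat.exists_eq_add_of_le' hn
  have hone : (1 : Fin (N + 3)) ≠ 0 := Fin.ne_of_val_ne (by simp)
  have htwo : (1 + 1 : Fin (N + 3)) ≠ 0 :=
    Fin.ne_of_val_ne (by simp [Fin.val_add, Nat.mod_eq_of_lt])
  have h₁ : a + 1 ≠ a := add_ne_left.2 hone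
  have h₂ : a + 1 + 1 ≠ a := add_assoc a 1 1 ▸ add_ne_left.2 htwo
  have h₃ : a + 1 + 1 ≠ a + 1 := add_ne_left.2 hone
  funext l
  simp only [cycLap, add_left_inj, Pi.sub_apply, Pi.smul_apply, Pi.single_apply, smul_eq_mul]
  grind

theorem span_range_cycLap_le_ker {n : ℕ} [NeZero n] (hn : 3 ≤ n) {V : Type*} [AddCommGroup V]
    {f : Fin n → V} (hf : ∀ a, f (a + 1 + 1) + f a = (2 : ℤ) • f (a + 1)) :
    Submodule.span ℤ (Set.range (cycLap n)) ≤ LinearMap.ker (Fintype.linearCombination ℤ f) := by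
  refine Submodule.span_le.2 (Set.range_subset_iff.2 fun j => ?_)
  rw [← sub_add_cancel j 1, cycLap_add_one hn, SetLike.mem_coe, LinearMap.mem_ker, map_sub, map_sub,
    map_smul, Fintype.linearCombination_apply_single, Fintype.linearCombination_apply_single,
    Fintype.linearCombination_apply_single, one_smul, one_smul, one_smul, ← hf, add_sub_cancel_left,
    sub_self]

theorem single_add_single_sub_mem_span_cycLap {n : ℕ} [NeZero n] (hn : 3 ≤ n) (a b : Fin n) :
    (Pi.single a 1 + Pi.single b 1 - (Pi.single 0 1 + Pi.single (a + b) 1) : Fin n → ℤ) ∈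
      Submodule.span ℤ (Set.range (cycLap n)) := by
  set L := Submodule.span ℤ (Set.range (cycLap n))
  have hL (a : Fin n) : L.mkQ (Pi.single (a + 1 + 1) 1) + L.mkQ (Pi.single a 1) =
      (2 : ℤ) • L.mkQ (Pi.single (a + 1) 1) := by
    refine ((Submodule.Quotient.eq L).2 (Submodule.subset_span ⟨a + 1, ?_⟩)).symm
    rw [cycLap_add_one hn, sub_sub]
  rw [← Submodule.Quotient.eq]
  exact apply_add_apply_of_apply_add_one_add_one (f := fun a => L.mkQ (Pi.single a 1)) hL a b

variable {n : ℕ} {L : Submodule ℤ (Fin n → ℤ)}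

theorem X_mul_X_sub_mem_latticeIdeal (K : Type*) [Field K] {a b c d : Fin n}
    (h : (Pi.single a 1 + Pi.single b 1 - (Pi.single c 1 + Pi.single d 1) : Fin n → ℤ) ∈ L) :
    (X a * X b - X c * X d : MvPolynomial (Fin n) K) ∈ latticeIdeal n K L := by
  have hprod (a b : Fin n) : (X a * X b : MvPolynomial (Fin n) K) =
      ∏ i, X i ^ (Pi.single a 1 + Pi.single b 1 : Fin n → ℕ) i := by
    simp only [Pi.add_apply, pow_add, Finset.prod_mul_distrib, Pi.single_apply]
    simp [pow_ite]
  have hcast (a b : Fin n) : (fun i => ((Pi.single a 1 + Pi.single b 1 : Fin n → ℕ) i : ℤ)) =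
      Pi.single a 1 + Pi.single b 1 := by
    funext i
    simp [Pi.single_apply]
  rw [hprod, hprod c]
  exact Ideal.subset_span ⟨_, _, by rwa [hcast, hcast], rfl⟩

theorem sum_smul_eq_of_sub_mem {V : Type*} [AddCommGroup V] {f : Fin n → V}
    (hf : L ≤ LinearMap.ker (Fintype.linearCombination ℤ f)) {u v : Fin n → ℕ}
    (huv : ((fun i => (u i : ℤ)) - fun i => (v i : ℤ)) ∈ L) :
    ∑ i, u i • f i = ∑ i, v i • f i := by
  have h := hf huv
  rw [LinearMap.mem_ker, map_sub, sub_eq_zero] at h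
  simpa only [Fintype.linearCombination_apply, natCast_zsmul] using h

theorem latticeIdeal_le_ker_gradedEval {K D Γ : Type*} [Field K] [CommRing D] [Algebra K D]
    [AddCommGroup Γ] {γ : Fin n → Γ} (hγ : L ≤ LinearMap.ker (Fintype.linearCombination ℤ γ))
    (hone : L ≤ LinearMap.ker (Fintype.linearCombination ℤ fun _ => (1 : ℤ))) (x : D) :
    latticeIdeal n K L ≤
      RingHom.ker (gradedEval γ fun _ => x : MvPolynomial (Fin n) K →ₐ[K] _) := by
  refine Ideal.span_le.2 ?_
  rintro _ ⟨u, v, huv, rfl⟩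
  have hdeg : ∑ i, u i = ∑ i, v i := by
    simpa [← Nat.cast_sum] using sum_smul_eq_of_sub_mem hone huv
  have heval (w : Fin n → ℕ) : gradedEval (K := K) γ (fun _ => x) (∏ i, X i ^ w i) =
      AddMonoidAlgebra.single (∑ i, w i • γ i) (x ^ ∑ i, w i) := by
    simp only [map_prod, map_pow, gradedEval_X, AddMonoidAlgebra.single_pow,
      AddMonoidAlgebra.prod_single, Finset.prod_pow_eq_pow_sum]
  rw [SetLike.mem_coe, RingHom.mem_ker, map_sub, heval, heval, sum_smul_eq_of_sub_mem hγ huv, hdeg,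
    sub_self]

theorem hasBettiNumber_latticeIdeal_cycLap (K : Type u) [Field K] {n : ℕ} [NeZero n] (hn : 3 ≤ n)
    (i : ℕ) :
    HasBettiNumber (Ideal.span (Set.range X) : Ideal (MvPolynomial (Fin n) K))
      (MvPolynomial (Fin n) K ⧸ latticeIdeal n K (Submodule.span ℤ (Set.range (cycLap n)))) i
      (if i = 0 then 1 else i * n.choose (i + 1)) := by
  have hI := latticeIdeal_le_ker_gradedEval (K := K) (γ := id) (hγ := span_range_cycLap_le_ker hn
    fun a => by rw [id, id, id]; abel) (span_range_cycLap_le_ker hn fun _ => by norm_num)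
    (Polynomial.X : Polynomial K)
  obtain ⟨N, rfl⟩ := Nat.exists_eq_succ_of_ne_zero (NeZero.ne n)
  refine hasBettiNumber_quotient (s := {0}) (Fin.succ_injective N) (Fin.range_succ N)
    (fun k l => ⟨0, rfl, k.succ + l.succ,
      X_mul_X_sub_mem_latticeIdeal K (single_add_single_sub_mem_span_cycLap hn _ _)⟩)
    hI (fun _ h => h) ?_ ?_ (fun _ => Polynomial.X_ne_zero) i
  · exact algebraicIndependent_unique_type_iff.2 (Polynomial.transcendental_X K)
  · have hid : (Fin.cons 0 fun k : Fin N => k.succ : Fin (N + 1) → Fin (N + 1)) = id :=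
      funext (Fin.cases rfl fun _ => rfl)
    exact hid ▸ Function.injective_id

end Cycle

section RationalNormalCurve

section Hankel

variable {M : Type*} {n : ℕ} {y : ℕ → M}

theorem mul_eq_apply_zero_mul_of_hankel [Mul M]
    (hy : ∀ i j, i < j → j < n → y (i + 1) * y j = y i * y (j + 1)) {i j : ℕ} (hij : i ≤ j)
    (hn : i + j ≤ n) : y i * y j = y 0 * y (i + j) := by
  induction i generalizing j with
  | zero => rw [zero_add]
  | succ i ih =>
    rw [hy i j hij (by omega), ih (by omega) (by omega), add_right_comm, add_assoc i j 1]

theorem mul_eq_apply_mul_of_hankel [CommMagma M]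
    (hy : ∀ i j, i < j → j < n → y (i + 1) * y j = y i * y (j + 1)) {i j : ℕ} (hij : i ≤ j)
    (hj : j ≤ n) (hn : n ≤ i + j) : y i * y j = y n * y (i + j - n) := by
  induction hj using Nat.decreasingInduction generalizing i with
  | self => rw [mul_comm, Nat.add_sub_cancel]
  | of_succ j hj ih =>
    obtain ⟨i, rfl⟩ : ∃ i', i = i' + 1 := ⟨i - 1, by omega⟩
    rw [hy i j hij hj, ih (by omega) (by omega), add_right_comm, add_assoc i j 1]

end Hankel

variable (K : Type u) [Field K] (n : ℕ)

variable {n} in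
theorem val_xIdx_succ {k : ℕ} (hk : k ≤ n) : (xIdx n (k + 1) : ℕ) = k :=
  Nat.mod_eq_of_lt (Nat.lt_succ_of_le hk)

variable {n} in
theorem exists_X_mul_X_sub_mem_Pideal {a b : ℕ} (ha : a ≤ n) (hb : b ≤ n) :
    ∃ i ∈ ({0, Fin.last n} : Set (Fin (n + 1))), ∃ j,
      (X (xIdx n (a + 1)) * X (xIdx n (b + 1)) - X i * X j : MvPolynomial (Fin (n + 1)) K) ∈
        Pideal n K := by
  wlog hab : a ≤ b generalizing a b
  · rw [mul_comm (X (xIdx n (a + 1)))]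
    exact this hb ha (le_of_not_ge hab)
  have hy (i j : ℕ) (hij : i < j) (hj : j < n) :
      Ideal.Quotient.mk (Pideal n K) (X (xIdx n (i + 1 + 1))) *
        Ideal.Quotient.mk (Pideal n K) (X (xIdx n (j + 1))) =
      Ideal.Quotient.mk (Pideal n K) (X (xIdx n (i + 1))) *
        Ideal.Quotient.mk (Pideal n K) (X (xIdx n (j + 1 + 1))) := by
    rw [← map_mul, ← map_mul]
    exact Ideal.Quotient.eq.2
      (Ideal.subset_span ⟨i + 1 + 1, j + 1, by omega, by omega, by omega, rfl⟩)
  simp only [← Ideal.Quotient.eq, map_mul]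
  rcases le_total (a + b) n with hn | hn
  · exact ⟨_, .inl (Fin.ext (val_xIdx_succ n.zero_le)), _,
      mul_eq_apply_zero_mul_of_hankel (y := fun k => Ideal.Quotient.mk (Pideal n K)
        (X (xIdx n (k + 1)))) hy hab hn⟩
  · exact ⟨_, .inr (Fin.ext (val_xIdx_succ le_rfl)), _,
      mul_eq_apply_mul_of_hankel (y := fun k => Ideal.Quotient.mk (Pideal n K)
        (X (xIdx n (k + 1)))) hy hab hb hn⟩

theorem Pideal_le_ker_gradedEval {D Γ : Type*} [CommRing D] [Algebra K D]
    [AddCommMonoidWithOne Γ] (S T : D) :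
    Pideal n K ≤ RingHom.ker (gradedEval (fun i : Fin (n + 1) => ((i : ℕ) : Γ))
      (fun i => S ^ (n - i : ℕ) * T ^ (i : ℕ)) : MvPolynomial (Fin (n + 1)) K →ₐ[K] _) := by
  refine Ideal.span_le.2 ?_
  rintro _ ⟨a, b, ha, hab, hb, rfl⟩
  obtain ⟨a, rfl⟩ : ∃ a', a = a' + 1 + 1 := ⟨a - 2, by omega⟩
  obtain ⟨b, rfl⟩ : ∃ b', b = b' + 1 := ⟨b - 1, by omega⟩
  rw [SetLike.mem_coe, RingHom.mem_ker, map_sub, sub_eq_zero]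
  simp only [map_mul, gradedEval_X, AddMonoidAlgebra.single_mul_single, Nat.add_sub_cancel]
  rw [val_xIdx_succ (by omega), val_xIdx_succ (by omega), val_xIdx_succ (by omega),
    val_xIdx_succ (by omega), mul_mul_mul_comm, mul_mul_mul_comm (S ^ (n - a))]
  have hS : n - (a + 1) + (n - b) = n - a + (n - (b + 1)) := by omega
  simp only [← Nat.cast_add, ← pow_add, hS, Nat.succ_add_eq_add_succ]

variable {n} in
theorem range_castSucc_succ :
    Set.range (fun k : Fin n => k.succ.castSucc) =
      ({0, Fin.last (n + 1)} : Set (Fin (n + 2)))ᶜ := by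
  ext i
  refine ⟨?_, fun hi => ?_⟩
  · rintro ⟨k, rfl⟩
    simp [Fin.ext_iff, k.2.ne]
  · obtain ⟨j, rfl⟩ := Fin.exists_castSucc_eq.2 fun h => hi (.inr h)
    obtain ⟨k, rfl⟩ := Fin.exists_succ_eq.2 fun h => hi (.inl (congrArg Fin.castSucc h))
    exact ⟨k, rfl⟩

theorem algebraicIndependent_X_zero_pow_mul_X_last_pow [NeZero n] :
    AlgebraicIndependent K fun i : ({0, Fin.last n} : Set (Fin (n + 1))) =>
      (X 0 ^ (n - i : ℕ) * X (Fin.last n) ^ (i : ℕ) : MvPolynomial (Fin (n + 1)) K) := by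
  have hX : AlgebraicIndependent K fun i => (X i : MvPolynomial (Fin (n + 1)) K) ^ n :=
    expand_injective (NeZero.pos n)
  convert hX.comp _ Subtype.val_injective using 1
  funext ⟨i, hi⟩
  rcases hi with rfl | rfl <;> simp

theorem injective_cons_zero_natCast_zmod :
    Function.Injective (Fin.cons 0 fun k : Fin n => ((k.succ.castSucc : ℕ) : ZMod (n + 1)) :
      Fin (n + 1) → ZMod (n + 1)) := by
  have hcast : (Fin.cons 0 fun k : Fin n => ((k.succ.castSucc : ℕ) : ZMod (n + 1)) :
      Fin (n + 1) → ZMod (n + 1)) = fun k : Fin (n + 1) => ((k : ℕ) : ZMod (n + 1)) :=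
    funext (Fin.cases Nat.cast_zero.symm fun _ => rfl)
  rw [hcast]
  intro k l hkl
  exact Fin.ext (Nat.ModEq.eq_of_lt_of_lt ((ZMod.natCast_eq_natCast_iff _ _ _).1 hkl) k.2 l.2)

theorem hasBettiNumber_Pideal [NeZero n] (i : ℕ) :
    HasBettiNumber (Ideal.span (Set.range X) : Ideal (MvPolynomial (Fin (n + 1)) K))
      (MvPolynomial (Fin (n + 1)) K ⧸ Pideal n K) i
      (if i = 0 then 1 else i * n.choose (i + 1)) := by
  have hI := Pideal_le_ker_gradedEval K n (Γ := ZMod n)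
    (X 0 : MvPolynomial (Fin (n + 1)) K) (X (Fin.last n))
  have hX := algebraicIndependent_X_zero_pow_mul_X_last_pow K n
  obtain ⟨N, rfl⟩ := Nat.exists_eq_succ_of_ne_zero (NeZero.ne n)
  refine hasBettiNumber_quotient (fun _ _ h => Fin.succ_injective N (Fin.castSucc_injective _ h))
    range_castSucc_succ (fun k l => ?_) hI ?_ hX (injective_cons_zero_natCast_zmod N)
    (fun _ => mul_ne_zero (pow_ne_zero _ (X_ne_zero _)) (pow_ne_zero _ (X_ne_zero _))) i
  · have hx (k : Fin N) : xIdx (N + 1) (k + 1 + 1) = k.succ.castSucc :=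
      Fin.ext (val_xIdx_succ (by omega))
    rw [← hx, ← hx]
    exact exists_X_mul_X_sub_mem_Pideal K (by omega) (by omega)
  · rintro _ (rfl | rfl) <;> simp

end RationalNormalCurve

/-- `R_n/I_{C_n}` and `R_{n+1}/P_n` have the same Betti table:
`β_0 = 1` on both sides, and `β_i = i·C(n, i+1)` for `i ≥ 1` (which vanishes for
`i ≥ n`).  A Betti number `β_i(N) = b` is expressed by `Tor_i^R(R/𝔪, N) ≅ (R/𝔪)^b`. -/
theorem statement_11 (K : Type*) [Field K] (n : ℕ) [NeZero n] (hn : 3 ≤ n) :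
    (∀ i : ℕ,
      Nonempty ((TorKN n K i
          (latticeIdeal n K (Submodule.span ℤ (Set.range (cycLap n)))))
        ≃ₗ[MvPolynomial (Fin n) K]
        (Fin (if i = 0 then 1 else i * Nat.choose n (i + 1)) →
          MvPolynomial (Fin n) K ⧸ (Ideal.span (Set.range X) :
            Ideal (MvPolynomial (Fin n) K))))) ∧
    (∀ i : ℕ,
      Nonempty ((TorKN (n + 1) K i (Pideal n K))
        ≃ₗ[MvPolynomial (Fin (n + 1)) K]
        (Fin (if i = 0 then 1 else i * Nat.choose n (i + 1)) →
          MvPolynomial (Fin (n + 1)) K ⧸ (Ideal.span (Set.range X) :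
            Ideal (MvPolynomial (Fin (n + 1)) K))))) :=
  ⟨hasBettiNumber_latticeIdeal_cycLap K hn, hasBettiNumber_Pideal K n⟩
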